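/- arXiv:1501.04370 — 2 statements merged into one kernel-verified Lean document; each statement's English description precedes it below -/
import Mathlib

section
/- For every parent-set vector G = (Pa_i)_{i∈V} with Pa_i ⊆ V \ {i} for all i, the marginal probability of drawing G by the two-stage procedure — first draw a linear ordering ≺ with probability P_ord(≺) = Π_{i∈V} α_i(U_i^≺) / L(V), then, given ≺, draw independently for each i ∈ V a parent set Pa_i ⊆ U_i^≺ with probability β_i(Pa_i) / Σ_{Pa ⊆ U_i^≺} β_i(Pa) — equals p_≺(G|D) := Σ_{≺ : G ⊆ ≺} Π_{i∈V} q_i(U_i^≺) β_i(Pa_i) / L(V); that is, Σ_{≺ : G ⊆ ≺} P_ord(≺) · Π_{i∈V} [ β_i(Pa_i) q_i(U_i^≺) / α_i(U_i^≺) ] = p_≺(G|D), and hence N independent repetitions of the procedure yield N independent, identically distributed DAG samples with probability mass function p_≺(·|D). -/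
/-- The finite set of elements of the list `l` strictly preceding the element `i`
(the prefix of `l` before the first occurrence of `i`). -/
def predSet {ι : Type*} [DecidableEq ι] (l : List ι) (i : ι) : Finset ι :=
  (l.takeWhile (fun a => decide (a ≠ i))).toFinset

/-- All linear orderings of the finite set `S`, i.e. all lists enumerating the
elements of `S` without repetition. -/
noncomputable def orderings {ι : Type*} [DecidableEq ι] (S : Finset ι) : Finset (List ι) :=
  S.toList.permutations.toFinset

/-- `α_i(S) := q_i(S) · Σ_{Pa ⊆ S} β_i(Pa)`. -/
noncomputable def alpha {ι : Type*} [DecidableEq ι] (q β : ι → Finset ι → ℝ)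
    (i : ι) (S : Finset ι) : ℝ :=
  q i S * ∑ Pa ∈ S.powerset, β i Pa

/-- `L(S)`: the sum over all linear orderings `(σ₁, …, σ_k)` of `S` of
`∏_{j=1}^{k} α_{σ_j}({σ₁, …, σ_{j−1}})`, with `L(∅) = 1`. -/
noncomputable def Lfun {ι : Type*} [DecidableEq ι] (α : ι → Finset ι → ℝ) (S : Finset ι) : ℝ :=
  ∑ l ∈ orderings S, ∏ i ∈ S, α i (predSet l i)

theorem prod_mul_prod_div_cancel {κ M : Type*} [CommGroupWithZero M] {s : Finset κ} {f g : κ → M}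
    (hf : ∀ i ∈ s, f i ≠ 0) : (∏ i ∈ s, f i) * ∏ i ∈ s, g i / f i = ∏ i ∈ s, g i := by
  rw [Finset.prod_div_distrib, mul_div_cancel₀ _ (Finset.prod_ne_zero_iff.2 hf)]

section

variable {ι : Type*} [DecidableEq ι]

theorem predSet_subset_erase (l : List ι) (i : ι) : predSet l i ⊆ l.toFinset.erase i := by
  intro a ha
  have ha' : a ∈ l.takeWhile (fun a => decide (a ≠ i)) := List.mem_toFinset.1 ha
  have hne : a ≠ i := by simpa only [decide_eq_true_eq] using List.mem_takeWhile_imp ha'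
  have hmem : a ∈ l := (List.takeWhile_sublist _).subset ha'
  exact Finset.mem_erase.2 ⟨hne, List.mem_toFinset.2 hmem⟩

theorem mem_orderings {S : Finset ι} {l : List ι} : l ∈ orderings S ↔ l.Perm S.toList := by
  rw [orderings, List.mem_toFinset, List.mem_permutations]

theorem toFinset_eq_of_mem_orderings {S : Finset ι} {l : List ι} (hl : l ∈ orderings S) :
    l.toFinset = S := by
  rw [List.toFinset_eq_of_perm _ _ (mem_orderings.1 hl), Finset.toList_toFinset]

theorem predSet_subset_erase_of_mem_orderings {S : Finset ι} {l : List ι} (hl : l ∈ orderings S)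
    (i : ι) : predSet l i ⊆ S.erase i :=
  toFinset_eq_of_mem_orderings hl ▸ predSet_subset_erase l i

theorem prod_alpha_mul_prod_div_alpha {q β : ι → Finset ι → ℝ} {V : Finset ι} {U : ι → Finset ι}
    (hα : ∀ i ∈ V, alpha q β i (U i) ≠ 0) (G : ι → Finset ι) :
    (∏ i ∈ V, alpha q β i (U i)) * ∏ i ∈ V, β i (G i) * q i (U i) / alpha q β i (U i)
      = ∏ i ∈ V, q i (U i) * β i (G i) :=
  (prod_mul_prod_div_cancel hα).trans (Finset.prod_congr rfl fun _ _ => mul_comm _ _)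

theorem dds_marginal_eq_posterior_general (q β : ι → Finset ι → ℝ) (V : Finset ι)
    (hα : ∀ i ∈ V, ∀ S ⊆ V.erase i, 0 < alpha q β i S) (G : ι → Finset ι) :
    ∑ l ∈ (orderings V).filter (fun l => ∀ i ∈ V, G i ⊆ predSet l i),
        ((∏ i ∈ V, alpha q β i (predSet l i)) / Lfun (alpha q β) V)
          * ∏ i ∈ V, (β i (G i) * q i (predSet l i) / alpha q β i (predSet l i))
      = (∑ l ∈ (orderings V).filter (fun l => ∀ i ∈ V, G i ⊆ predSet l i),
          ∏ i ∈ V, q i (predSet l i) * β i (G i)) / Lfun (alpha q β) V := by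
  rw [Finset.sum_div]
  refine Finset.sum_congr rfl fun l hl => ?_
  have hl_ord : l ∈ orderings V := (Finset.mem_filter.1 hl).1
  have hα_ne : ∀ i ∈ V, alpha q β i (predSet l i) ≠ 0 := fun i hi =>
    (hα i hi _ (predSet_subset_erase_of_mem_orderings hl_ord i)).ne'
  rw [div_mul_eq_mul_div, prod_alpha_mul_prod_div_alpha hα_ne]

end

/-- For every parent-set vector `G = (Pa_i)_{i∈V}` with `Pa_i ⊆ V \ {i}` for all `i`, the
marginal probability of drawing `G` by the two-stage procedure — first draw a linear
ordering `≺` with probability `P_ord(≺) = Π_{i∈V} α_i(U_i^≺) / L(V)`, then, given `≺`,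
draw independently for each `i ∈ V` a parent set `Pa_i ⊆ U_i^≺` with probability
`β_i(Pa_i) / Σ_{Pa ⊆ U_i^≺} β_i(Pa) = β_i(Pa_i)·q_i(U_i^≺)/α_i(U_i^≺)` — equals
`p_≺(G|D) := Σ_{≺ : G ⊆ ≺} Π_{i∈V} q_i(U_i^≺) β_i(Pa_i) / L(V)`; that is,
`Σ_{≺ : G ⊆ ≺} P_ord(≺) · Π_{i∈V} [ β_i(Pa_i) q_i(U_i^≺) / α_i(U_i^≺) ] = p_≺(G|D)`.
Consequently, independent repetitions of the procedure yield independent, identically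
distributed DAG samples with probability mass function `p_≺(·|D)`. -/
theorem dds_marginal_eq_posterior {ι : Type*} [DecidableEq ι]
    (q β : ι → Finset ι → ℝ) (V : Finset ι)
    (hq : ∀ i ∈ V, ∀ S ⊆ V.erase i, 0 < q i S)
    (hβ : ∀ i ∈ V, ∀ S ⊆ V.erase i, 0 ≤ β i S)
    (hβsum : ∀ i ∈ V, ∀ S ⊆ V.erase i, 0 < ∑ Pa ∈ S.powerset, β i Pa)
    (G : ι → Finset ι) (hG : ∀ i ∈ V, G i ⊆ V.erase i) :
    ∑ l ∈ (orderings V).filter (fun l => ∀ i ∈ V, G i ⊆ predSet l i),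
        ((∏ i ∈ V, alpha q β i (predSet l i)) / Lfun (alpha q β) V)
          * ∏ i ∈ V, (β i (G i) * q i (predSet l i) / alpha q β i (predSet l i))
      = (∑ l ∈ (orderings V).filter (fun l => ∀ i ∈ V, G i ⊆ predSet l i),
          ∏ i ∈ V, q i (predSet l i) * β i (G i)) / Lfun (alpha q β) V :=
  dds_marginal_eq_posterior_general q β V
    (fun i hi S hS => mul_pos (hq i hi S hS) (hβsum i hi S hS)) G
end

section
/- For every i ∈ V and every subset U ⊆ V \ {i}, the sum, over all linear orderings ≺ of V in which the set of predecessors of i is exactly U, of Π_{l ∈ V} α_l(U_l^≺), equals α_i(U) · L(U) · R(V \ (U ∪ {i})). -/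
/-- `R(T)`: the sum over all linear orderings `(τ₁, …, τ_m)` of `T` of
`∏_{j=1}^{m} α_{τ_j}((V \ T) ∪ {τ₁, …, τ_{j−1}})`, with `R(∅) = 1`. -/
noncomputable def Rfun {ι : Type*} [DecidableEq ι] (α : ι → Finset ι → ℝ)
    (V T : Finset ι) : ℝ :=
  ∑ l ∈ orderings T, ∏ j ∈ T, α j ((V \ T) ∪ predSet l j)

/-!
An ordering of `V` in which `i` has predecessor set `U` is `a ++ i :: b` for a unique ordering `a`
of `U` and a unique ordering `b` of `V \ insert i U`. In its weight the entries of `a` see only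
their predecessors in `a`, while the entries of `b` see `insert i U` together with their
predecessors in `b`, so the weight is a product of a factor depending only on `a`, the factor
`α i U`, and a factor depending only on `b`.
-/

section PredSet

variable {ι : Type*} [DecidableEq ι]

theorem predSet_cons_self (i : ι) (l : List ι) : predSet (i :: l) i = ∅ := by
  simp [predSet]

theorem predSet_cons_of_ne {i j : ι} (h : i ≠ j) (l : List ι) :
    predSet (i :: l) j = insert i (predSet l j) := by
  simp [predSet, h]

theorem predSet_append_of_mem {a : List ι} {j : ι} (h : j ∈ a) (b : List ι) :
    predSet (a ++ b) j = predSet a j := by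
  induction a with
  | nil => simp at h
  | cons x a ih =>
    by_cases hx : x = j
    · simp [hx, predSet_cons_self]
    · have hj : j ∈ a := by simpa [Ne.symm hx] using h
      rw [List.cons_append, predSet_cons_of_ne hx, predSet_cons_of_ne hx, ih hj]

theorem predSet_append_of_notMem {a : List ι} {j : ι} (h : j ∉ a) (b : List ι) :
    predSet (a ++ b) j = a.toFinset ∪ predSet b j := by
  have ha : ∀ x ∈ a, decide (x ≠ j) = true := fun x hx => by
    simpa using ne_of_mem_of_not_mem hx h
  rw [predSet, List.takeWhile_append_of_pos ha, List.toFinset_append, predSet]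

theorem predSet_append_cons_self {a : List ι} {i : ι} (h : i ∉ a) (b : List ι) :
    predSet (a ++ i :: b) i = a.toFinset := by
  rw [predSet_append_of_notMem h, predSet_cons_self, Finset.union_empty]

end PredSet

section Orderings

variable {ι : Type*} [DecidableEq ι]

theorem mem_orderings_iff {S : Finset ι} {l : List ι} :
    l ∈ orderings S ↔ l.Nodup ∧ l.toFinset = S := by
  rw [orderings, List.mem_toFinset, List.mem_permutations]
  constructor
  · intro h
    exact ⟨h.nodup_iff.mpr S.nodup_toList,
      (List.toFinset_eq_of_perm _ _ h).trans S.toList_toFinset⟩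
  · rintro ⟨h, rfl⟩
    exact (List.toFinset_toList h).symm

theorem mem_iff_of_mem_orderings {S : Finset ι} {l : List ι} (h : l ∈ orderings S) {x : ι} :
    x ∈ l ↔ x ∈ S := by
  rw [← List.mem_toFinset, (mem_orderings_iff.mp h).2]

theorem cons_mem_orderings_iff {S : Finset ι} {i : ι} {l : List ι} :
    i :: l ∈ orderings S ↔ i ∈ S ∧ l ∈ orderings (S.erase i) := by
  simp only [mem_orderings_iff, List.nodup_cons, List.toFinset_cons, Finset.ext_iff,
    Finset.mem_insert, Finset.mem_erase, List.mem_toFinset]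
  grind

theorem append_mem_orderings_iff {S : Finset ι} {a b : List ι} :
    a ++ b ∈ orderings S ↔ a.Nodup ∧ a.toFinset ⊆ S ∧ b ∈ orderings (S \ a.toFinset) := by
  simp only [mem_orderings_iff, List.nodup_append', List.disjoint_left, List.toFinset_append,
    Finset.ext_iff, Finset.subset_iff, Finset.mem_union, Finset.mem_sdiff, List.mem_toFinset]
  grind

theorem append_cons_mem_orderings_iff {V : Finset ι} {i : ι} {a b : List ι} :
    a ++ i :: b ∈ orderings V ↔
      a.Nodup ∧ a.toFinset ⊆ V.erase i ∧ i ∈ V ∧ b ∈ orderings (V \ insert i a.toFinset) := by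
  rw [append_mem_orderings_iff, cons_mem_orderings_iff, Finset.mem_sdiff, ← Finset.sdiff_insert,
    Finset.subset_erase]
  tauto

theorem sum_orderings_filter_predSet_eq {M : Type*} [AddCommMonoid M] (f : List ι → M)
    {V : Finset ι} {i : ι} (hi : i ∈ V) {U : Finset ι} (hU : U ⊆ V.erase i) :
    ∑ l ∈ (orderings V).filter (fun l => predSet l i = U), f l =
      ∑ a ∈ orderings U, ∑ b ∈ orderings (V \ insert i U), f (a ++ i :: b) := by
  have hiU : i ∉ U := (Finset.subset_erase.mp hU).2
  have notMem {a : List ι} (ha : a ∈ orderings U) : i ∉ a :=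
    (mem_iff_of_mem_orderings ha).not.mpr hiU
  rw [← Finset.sum_product']
  symm
  refine Finset.sum_bij (fun p _ => p.1 ++ i :: p.2) ?maps ?inj ?surj (fun _ _ => rfl)
  case maps =>
    rintro ⟨a, b⟩ hab
    obtain ⟨ha, hb⟩ := Finset.mem_product.mp hab
    obtain ⟨a_nodup, rfl⟩ := mem_orderings_iff.mp ha
    exact Finset.mem_filter.mpr ⟨append_cons_mem_orderings_iff.mpr ⟨a_nodup, hU, hi, hb⟩,
      predSet_append_cons_self (notMem ha) b⟩
  case inj =>
    rintro ⟨a, b⟩ - ⟨c, d⟩ hcd h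
    have hic : i ∉ c := notMem (Finset.mem_product.mp hcd).1
    have hid : i ∉ d := by
      simp [mem_iff_of_mem_orderings (Finset.mem_product.mp hcd).2]
    obtain ⟨rfl, -, rfl⟩ := (List.append_cons_inj_of_notMem hic hid).mp h.symm
    rfl
  case surj =>
    intro l hl
    obtain ⟨hlV, hlU⟩ := Finset.mem_filter.mp hl
    have hil : i ∈ l := (mem_iff_of_mem_orderings hlV).mpr hi
    obtain ⟨a, b, rfl⟩ := List.append_of_mem hil
    obtain ⟨a_nodup, haV, -, hb⟩ := append_cons_mem_orderings_iff.mp hlV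
    have hia : i ∉ a := fun h => (Finset.subset_erase.mp haV).2 (List.mem_toFinset.mpr h)
    obtain rfl : a.toFinset = U := (predSet_append_cons_self hia b).symm.trans hlU
    exact ⟨(a, b), Finset.mem_product.mpr ⟨mem_orderings_iff.mpr ⟨a_nodup, rfl⟩, hb⟩, rfl⟩

end Orderings

section Weight

variable {ι M : Type*} [DecidableEq ι] [CommMonoid M] (α : ι → Finset ι → M)

theorem prod_predSet_cons {i : ι} {l : List ι} (hi : i ∉ l) :
    ∏ j ∈ (i :: l).toFinset, α j (predSet (i :: l) j) =
      α i ∅ * ∏ j ∈ l.toFinset, α j (insert i (predSet l j)) := by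
  have hi' : i ∉ l.toFinset := by rwa [List.mem_toFinset]
  rw [List.toFinset_cons, Finset.prod_insert hi', predSet_cons_self]
  congr 1
  refine Finset.prod_congr rfl fun j hj => ?_
  rw [predSet_cons_of_ne (ne_of_mem_of_not_mem hj hi').symm]

theorem prod_predSet_append {a b : List ι} (hab : a.Disjoint b) :
    ∏ j ∈ (a ++ b).toFinset, α j (predSet (a ++ b) j) =
      (∏ j ∈ a.toFinset, α j (predSet a j)) *
        ∏ j ∈ b.toFinset, α j (a.toFinset ∪ predSet b j) := by
  rw [List.toFinset_append, Finset.prod_union (List.disjoint_toFinset_iff_disjoint.mpr hab)]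
  congr 1
  · refine Finset.prod_congr rfl fun j hj => ?_
    rw [predSet_append_of_mem (List.mem_toFinset.mp hj)]
  · refine Finset.prod_congr rfl fun j hj => ?_
    rw [predSet_append_of_notMem (hab.symm (List.mem_toFinset.mp hj))]

theorem prod_predSet_append_cons {a b : List ι} {i : ι} (hi : i ∉ b)
    (hab : a.Disjoint (i :: b)) :
    ∏ j ∈ (a ++ i :: b).toFinset, α j (predSet (a ++ i :: b) j) =
      (∏ j ∈ a.toFinset, α j (predSet a j)) *
        (α i a.toFinset * ∏ j ∈ b.toFinset, α j (insert i a.toFinset ∪ predSet b j)) := by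
  rw [prod_predSet_append α hab, prod_predSet_cons (fun j W => α j (a.toFinset ∪ W)) hi]
  simp only [Finset.union_empty, Finset.union_insert, Finset.insert_union]

end Weight

theorem sum_over_orderings_with_fixed_predecessors_general
    {ι R : Type*} [DecidableEq ι] [CommSemiring R] (α : ι → Finset ι → R)
    (V : Finset ι) (i : ι) (hi : i ∈ V) (U : Finset ι) (hU : U ⊆ V.erase i) :
    ∑ l ∈ (orderings V).filter (fun l => predSet l i = U), ∏ j ∈ V, α j (predSet l j) =
      α i U * (∑ a ∈ orderings U, ∏ j ∈ U, α j (predSet a j)) *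
        ∑ b ∈ orderings (V \ insert i U),
          ∏ j ∈ V \ insert i U, α j (insert i U ∪ predSet b j) := by
  rw [sum_orderings_filter_predSet_eq _ hi hU, mul_assoc, Finset.sum_mul_sum, Finset.mul_sum]
  refine Finset.sum_congr rfl fun a ha => ?_
  rw [Finset.mul_sum]
  refine Finset.sum_congr rfl fun b hb => ?_
  obtain ⟨a_nodup, rfl⟩ := mem_orderings_iff.mp ha
  obtain ⟨nodup, hV⟩ := mem_orderings_iff.mp
    (append_cons_mem_orderings_iff.mpr ⟨a_nodup, hU, hi, hb⟩)
  obtain ⟨-, tail_nodup, hdisj⟩ := List.nodup_append'.mp nodup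
  have weight := prod_predSet_append_cons α (List.nodup_cons.mp tail_nodup).1 hdisj
  rw [hV, (mem_orderings_iff.mp hb).2] at weight
  rw [weight, mul_left_comm]

/-- For every `i ∈ V` and every subset `U ⊆ V \ {i}`, the sum, over all linear
orderings `≺` of `V` in which the set of predecessors of `i` is exactly `U`, of
`Π_{l ∈ V} α_l(U_l^≺)`, equals `α_i(U) · L(U) · R(V \ (U ∪ {i}))`. -/
theorem sum_over_orderings_with_fixed_predecessors
    {ι : Type*} [DecidableEq ι] (α : ι → Finset ι → ℝ)
    (V : Finset ι) (i : ι) (hi : i ∈ V) (U : Finset ι) (hU : U ⊆ V.erase i) :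
    ∑ l ∈ (orderings V).filter (fun l => predSet l i = U), ∏ j ∈ V, α j (predSet l j)
      = α i U * Lfun α U * Rfun α V (V \ insert i U) := by
  have hUV : insert i U ⊆ V := Finset.insert_subset hi (hU.trans (Finset.erase_subset i V))
  rw [sum_over_orderings_with_fixed_predecessors_general α V i hi U hU, Lfun, Rfun,
    Finset.sdiff_sdiff_eq_self hUV]
end
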